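/- Let S ⊆ M_N(W) be a ∂_q-invariant subalgebra of the matrix algebra over the first Weyl algebra such that M_N(W) decomposes as the direct sum ⊕_{n≥0} p^n·S. Then there exists a ∂_q-invariant automorphism θ of M_N(W) with θ(p) = p and θ(S) = M_N(k[q]). -/

import Mathlib

open Polynomial

set_option synthInstance.maxHeartbeats 1000000
set_option maxHeartbeats 1000000

noncomputable section

variable (k : Type*) [Field k] [CharZero k]

/-- The operator `p`: multiplication by `X` on `k[X]`. -/
def pOp : Module.End k (Polynomial k) := LinearMap.mulLeft k (X : Polynomial k)

/-- The operator `q = d/dX` on `k[X]`. -/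
def qOp : Module.End k (Polynomial k) := derivative

/-- The (first) Weyl algebra, realized concretely as the subalgebra of
`End_k(k[X])` generated by multiplication by `X` and `d/dX`.  (In characteristic
zero this is a faithful model of `k⟨p,q | qp - pq = 1⟩`.) -/
def WeylA : Subalgebra k (Module.End k (Polynomial k)) :=
  Algebra.adjoin k {pOp k, qOp k}

/-- The element `p` of the Weyl algebra. -/
def pW : WeylA k := ⟨pOp k, Algebra.subset_adjoin (Set.mem_insert _ _)⟩

/-- The element `q` of the Weyl algebra. -/
def qW : WeylA k := ⟨qOp k, Algebra.subset_adjoin (Set.mem_insert_of_mem _ rfl)⟩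

variable (N : ℕ)

/-- `M_N(W)`, the `N×N` matrices over the Weyl algebra. -/
abbrev MW := Matrix (Fin N) (Fin N) (WeylA k)

/-- The scalar matrix `p·Id_N`. -/
def pM : MW k N := Matrix.diagonal fun _ => pW k

/-- The scalar matrix `q·Id_N`. -/
def qM : MW k N := Matrix.diagonal fun _ => qW k

/-- The derivation `∂_q(a) = [a,p]` on `M_N(W)`. -/
def dq (a : MW k N) : MW k N := a * pM k N - pM k N * a

/-- Evaluation of a polynomial at `p`, i.e. the embedding `k[p] → W`. -/
def polyP : Polynomial k →ₐ[k] WeylA k := Polynomial.aeval (pW k)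

/-- Evaluation of a polynomial at `q`, i.e. the embedding `k[q] → W`. -/
def polyQ : Polynomial k →ₐ[k] WeylA k := Polynomial.aeval (qW k)


set_option linter.unusedSectionVars false

theorem pid_units {K : Type*} [CommRing K] [IsDomain K] [IsPrincipalIdealRing K] {N : ℕ}
    (e : Fin N → Fin N → Matrix (Fin N) (Fin N) K)
    (he : ∀ i j l m, e i j * e l m = if j = l then e i m else 0)
    (o : Fin N) (h0 : e o o ≠ 0) :
    ∃ h h' : Matrix (Fin N) (Fin N) K, h' * h = 1 ∧ h * h' = 1 ∧
      ∀ i j, h' * e i j * h = Matrix.single i j 1 := by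
  obtain ⟨v, u, hv, huv⟩ : ∃ v u : Fin N → K, (e o o).mulVec v = v ∧ u ⬝ᵥ v = 1 := by
    obtain ⟨a, b, hab⟩ : ∃ a b, e o o a b ≠ 0 := by
      by_contra hc
      push Not at hc
      exact h0 (by ext i j; simpa using hc i j)
    set w : Fin N → K := fun i => e o o i b with hw
    have hew : (e o o).mulVec w = w := by
      have := he o o o o
      simp only [if_true] at this
      ext i
      have h2 := congrFun (congrFun this i) b
      simpa [Matrix.mul_apply, Matrix.mulVec, dotProduct] using h2
    obtain ⟨d, hd⟩ := (IsPrincipalIdealRing.principal (Ideal.span (Set.range w))).principal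
    have hd' : Ideal.span (Set.range w) = Ideal.span {d} := hd
    have h1 : ∀ i, ∃ c, w i = d * c := by
      intro i
      have : w i ∈ Ideal.span {d} := hd' ▸ Ideal.subset_span ⟨i, rfl⟩
      exact Ideal.mem_span_singleton.1 this
    choose v hv using h1
    have h2 : d ∈ Ideal.span (Set.range w) := hd' ▸ Ideal.mem_span_singleton_self d
    obtain ⟨u, hu⟩ := (Ideal.mem_span_range_iff_exists_fun).1 h2
    have hd0 : d ≠ 0 := by
      rintro rfl
      apply hab
      have := hv a
      simpa [hw] using this
    have hwv : w = d • v := by ext i; simp [hv]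
    refine ⟨v, u, ?_, ?_⟩
    · rw [hwv, Matrix.mulVec_smul] at hew
      ext i
      have := congrFun hew i
      simp only [Pi.smul_apply, smul_eq_mul] at this
      exact mul_left_cancel₀ hd0 this
    · apply mul_left_cancel₀ hd0
      rw [mul_one]
      conv_rhs => rw [← hu]
      simp only [dotProduct, Finset.mul_sum, hv]
      refine Finset.sum_congr rfl fun i _ => by ring
  let h : Matrix (Fin N) (Fin N) K := Matrix.of fun r j => (e j o).mulVec v r
  let h' : Matrix (Fin N) (Fin N) K := Matrix.of fun i r => Matrix.vecMul u (e o i) r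
  have key : ∀ (M : Matrix (Fin N) (Fin N) K) a b,
      (h' * M * h) a b = u ⬝ᵥ (e o a * M * e b o).mulVec v := by
    intro M a b
    have e1 : (h' * M * h) a b = (Matrix.vecMul (Matrix.vecMul u (e o a)) M) ⬝ᵥ (e b o).mulVec v := by
      simp only [Matrix.mul_apply, h, h', Matrix.of_apply, dotProduct]
      rfl
    rw [e1, ← Matrix.mulVec_mulVec, ← Matrix.mulVec_mulVec, Matrix.dotProduct_mulVec u, Matrix.dotProduct_mulVec (Matrix.vecMul u _)]
  have hh : h' * h = 1 := by
    ext a b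
    have := key 1 a b
    rw [mul_one, mul_one, he] at this
    rw [this, Matrix.one_apply]
    split_ifs <;> simp [hv, huv]
  refine ⟨h, h', hh, mul_eq_one_comm.1 hh, ?_⟩
  intro i j
  ext a b
  rw [key, he, Matrix.single_apply]
  by_cases h1 : a = i
  · subst h1
    rw [if_pos rfl, he]
    by_cases h2 : j = b
    · simp [h2, hv, huv]
    · simp [h2]
  · simp [h1, Ne.symm h1]

theorem deriv_surj {k : Type*} [Field k] [CharZero k] (b : k[X]) : ∃ c : k[X], derivative c = b := by
  induction b using Polynomial.induction_on' with
  | add p q hp hq =>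
    obtain ⟨x, rfl⟩ := hp
    obtain ⟨y, rfl⟩ := hq
    exact ⟨x + y, by simp⟩
  | monomial n a =>
    refine ⟨monomial (n+1) (a / (n+1)), ?_⟩
    rw [derivative_monomial]
    have : (n : k) + 1 ≠ 0 := by exact_mod_cast Nat.succ_ne_zero n
    congr 1
    push_cast
    field_simp

section weyl

theorem qp_rel : qW k * pW k = pW k * qW k + 1 := by
  apply Subtype.ext
  apply LinearMap.ext
  intro f
  simp [qW, pW, qOp, pOp]
  abel

theorem pW_apply (f : k[X]) : (pW k : Module.End k k[X]) f = X * f := rfl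

theorem polyP_apply (a f : k[X]) : (polyP k a : Module.End k k[X]) f = a * f := by
  induction a using Polynomial.induction_on' generalizing f with
  | add p q hp hq => simp [hp, hq, add_mul]
  | monomial n c =>
    have : ∀ f : k[X], ((pW k ^ n : WeylA k) : Module.End k k[X]) f = X ^ n * f := by
      induction n with
      | zero => simp
      | succ n ih =>
        intro f
        rw [pow_succ]
        change ((pW k ^ n : WeylA k) : Module.End k k[X]) ((pW k : Module.End k k[X]) f) = _
        rw [ih, pW_apply, pow_succ, mul_assoc]
    rw [polyP, aeval_monomial]
    change (algebraMap k (Module.End k k[X]) c) (((pW k ^ n : WeylA k) : Module.End k k[X]) f) = _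
    rw [this, ← C_mul_X_pow_eq_monomial, mul_assoc, Module.algebraMap_end_apply, smul_eq_C_mul]

theorem polyP_inj : Function.Injective (polyP k) := by
  intro a b h
  have := congrArg (fun w : WeylA k => (w : Module.End k k[X]) 1) h
  simpa [polyP_apply] using this

theorem comm_p (w : WeylA k) (h : w * pW k = pW k * w) : ∃ f : k[X], w = polyP k f := by
  refine ⟨(w : Module.End k k[X]) 1, ?_⟩
  have h1 : ∀ f : k[X], (w : Module.End k k[X]) (X * f) = X * (w : Module.End k k[X]) f := by
    intro f
    have := congrArg (fun w : WeylA k => (w : Module.End k k[X]) f) h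
    exact this
  apply Subtype.ext
  apply LinearMap.ext
  intro f
  rw [polyP_apply]
  induction f using Polynomial.induction_on' with
  | add p q hp hq => rw [map_add, hp, hq, mul_add]
  | monomial n c =>
    have : ∀ n : ℕ, (w : Module.End k k[X]) (X ^ n) = X ^ n * (w : Module.End k k[X]) 1 := by
      intro n
      induction n with
      | zero => simp
      | succ n ih => rw [pow_succ', h1, ih, mul_assoc]
    rw [← C_mul_X_pow_eq_monomial, ← smul_eq_C_mul, map_smul, this, mul_smul_comm, mul_comm]

theorem W_cases (a : k[X]) : ∃ (c : k) (g : k[X]), polyP k a = algebraMap k _ c + pW k * polyP k g := by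
  refine ⟨a.coeff 0, a.divX, ?_⟩
  conv_lhs => rw [← divX_mul_X_add a]
  rw [mul_comm]
  rw [map_add, map_mul, polyP, aeval_X, aeval_C, add_comm]

theorem one_ne_p_mul (w : WeylA k) (h : 1 = pW k * w) : False := by
  have := congrArg (fun w : WeylA k => (w : Module.End k k[X]) 1) h
  change (1 : k[X]) = X * _ at this
  have := congrArg (Polynomial.eval 0) this
  simp at this

variable {k}
variable {A : Type*} [Ring A] [Algebra k A]

/-- normal ordering map -/
def Phi (P Q : A) : k[X][X] →+ A :=
  Polynomial.eval₂AddMonoidHom (Polynomial.aeval P : k[X] →ₐ[k] A).toRingHom Q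

theorem Phi_mon (P Q : A) (n : ℕ) (a : k[X]) : Phi P Q (monomial n a) = aeval P a * Q ^ n := by
  simp [Phi, eval₂_monomial]

theorem Q_comm {P Q : A} (h' : Q * P = P * Q + 1) (a : k[X]) :
    Q * aeval P a = aeval P a * Q + aeval P (derivative a) := by
  induction a using Polynomial.induction_on with
  | C a => simp [Algebra.commutes]
  | add p q hp hq => simp only [map_add, mul_add, add_mul, hp, hq]; abel
  | monomial n a ih =>
    have e1 : (C a * X ^ (n+1) : k[X]) = (C a * X ^ n) * X := by ring
    rw [e1]
    generalize C a * X ^ n = b at ih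
    rw [map_mul, ← mul_assoc, ih, derivative_mul, map_add, map_mul,
      derivative_X, mul_one, aeval_X, add_mul, mul_assoc, h', mul_add, mul_one]
    simp only [mul_assoc]
    abel

theorem P_comm {P Q : A} (h' : Q * P = P * Q + 1) (n : ℕ) :
    Q ^ n * P - P * Q ^ n = n • Q ^ (n - 1) := by
  induction n with
  | zero => simp
  | succ n ih =>
    have ih' : Q ^ n * P = P * Q ^ n + n • Q ^ (n-1) := by rw [← ih]; abel
    rw [pow_succ, mul_assoc, h', mul_add, ← mul_assoc, ih', add_mul, mul_one]
    rcases n with _ | n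
    · simp
    · simp only [Nat.add_sub_cancel, smul_mul_assoc, ← pow_succ, mul_assoc]
      rw [add_smul (n+1) 1, one_smul]
      abel

/-- the derivation `[-, P]` -/
def dA (P w : A) : A := w * P - P * w

theorem dA_sub (P a b : A) : dA P (a - b) = dA P a - dA P b := by
  simp only [dA, sub_mul, mul_sub]; abel

theorem dA_aeval {P c : A} (h : c * P = P * c + 1) (b : k[X]) :
    dA P (aeval c b) = aeval c (derivative b) := by
  induction b using Polynomial.induction_on' with
  | add p q hp hq => rw [map_add, map_add, map_add, ← hp, ← hq]; simp only [dA, add_mul, mul_add]; abel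
  | monomial n a =>
    rw [derivative_monomial, aeval_monomial, aeval_monomial]
    have : P * (algebraMap k A a * c ^ n) = algebraMap k A a * (P * c ^ n) := by
      rw [← mul_assoc, ← mul_assoc, Algebra.commutes]
    rw [dA, this, mul_assoc, ← mul_sub, P_comm h, map_mul, map_natCast, nsmul_eq_mul, mul_assoc]

/-- generation of a derivation-stable set by `c` -/
theorem gen_c {P c : A} (h : c * P = P * c + 1) (hnil : ∀ w : A, ∃ n, (dA P)^[n] w = 0)
    (T : Set A)
    (hd : ∀ w ∈ T, dA P w ∈ T) (hs : ∀ w ∈ T, ∀ b : k[X], w - aeval c b ∈ T)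
    (h0 : ∀ w ∈ T, dA P w = 0 → ∃ a : k, w = algebraMap k _ a) (w : A) (hw : w ∈ T) :
    ∃ b : k[X], w = aeval c b := by
  obtain ⟨n, hn⟩ := hnil w
  induction n generalizing w with
  | zero => exact ⟨0, by simpa using hn⟩
  | succ n ih =>
    obtain ⟨b, hb⟩ := ih (dA P w) (hd w hw) (by simpa using hn)
    obtain ⟨b1, rfl⟩ := deriv_surj b
    obtain ⟨a, ha⟩ := h0 _ (hs w hw b1) (by rw [dA_sub, hb, dA_aeval h, sub_self])
    exact ⟨b1 + C a, by rw [map_add, aeval_C, ← ha]; abel⟩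

theorem Phi_X {P Q : A} (F : k[X][X]) : P * Phi P Q F = Phi P Q (C X * F) := by
  induction F using Polynomial.induction_on' with
  | add p q hp hq => simp only [map_add, mul_add, hp, hq]
  | monomial n a => rw [C_mul_monomial, Phi_mon, Phi_mon]; simp [mul_assoc]

theorem Phi_smul {P Q : A} (c : k) (F : k[X][X]) : algebraMap k (A) c * Phi P Q F = Phi P Q (C (C c) * F) := by
  induction F using Polynomial.induction_on' with
  | add p q hp hq => simp only [map_add, mul_add, hp, hq]
  | monomial n a => rw [C_mul_monomial, Phi_mon, Phi_mon]; simp [mul_assoc]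

theorem Phi_Y (A : Type*) [Ring A] [Algebra k A] (F : k[X][X]) :
    ∃ F' : k[X][X], ∀ P Q : A, Q * P = P * Q + 1 →
    Q * Phi P Q F = Phi P Q F' := by
  induction F using Polynomial.induction_on' with
  | add p q hp hq =>
    obtain ⟨x, hx⟩ := hp
    obtain ⟨y, hy⟩ := hq
    exact ⟨x + y, fun P Q h => by rw [map_add, map_add, mul_add, hx P Q h, hy P Q h]⟩
  | monomial n a =>
    refine ⟨monomial (n+1) a + monomial n (derivative a), fun P Q h => ?_⟩
    rw [map_add, Phi_mon, Phi_mon, Phi_mon, ← mul_assoc, Q_comm h, add_mul, pow_succ', mul_assoc]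

theorem Phi_d {P Q : A} (h : Q * P = P * Q + 1) (F : k[X][X]) :
    Phi P Q F * P - P * Phi P Q F = Phi P Q (derivative F) := by
  induction F using Polynomial.induction_on' with
  | add p q hp hq => simp only [map_add, mul_add, add_mul, ← hp, ← hq]; abel
  | monomial n a =>
    rw [derivative_monomial, Phi_mon, Phi_mon]
    have e1 : P * (aeval P a * Q ^ n) = aeval P a * (P * Q ^ n) := by
      rw [← mul_assoc, ← mul_assoc]
      congr 1
      have := congrArg (aeval P) (mul_comm X a)
      simpa using this
    rw [e1, mul_assoc, ← mul_sub, P_comm h, map_mul, map_natCast, nsmul_eq_mul, mul_assoc]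

theorem Phi_inj (F : k[X][X]) (h : Phi (pW k) (qW k) F = 0) : F = 0 := by
  obtain ⟨n, hn⟩ : ∃ n, F.natDegree ≤ n := ⟨_, le_rfl⟩
  induction n generalizing F with
  | zero =>
    rw [eq_C_of_natDegree_le_zero hn] at h ⊢
    rw [← monomial_zero_left, Phi_mon, pow_zero, mul_one] at h
    have : F.coeff 0 = 0 := polyP_inj k (by rw [map_zero]; exact h)
    rw [this, C_0]
  | succ n ih =>
    have h1 : derivative F = 0 := by
      apply ih
      · rw [← Phi_d (qp_rel k), h, mul_zero, zero_mul]; exact sub_self _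
      · exact (natDegree_derivative_le F).trans (by omega)
    have h2 := derivative_eq_zero.1 h1
    rw [eq_C_of_natDegree_le_zero h2.le] at h ⊢
    rw [← monomial_zero_left, Phi_mon, pow_zero, mul_one] at h
    have : F.coeff 0 = 0 := polyP_inj k (by rw [map_zero]; exact h)
    rw [this, C_0]

theorem W_induction {motive : WeylA k → Prop} (hp : motive (pW k)) (hq : motive (qW k))
    (hc : ∀ c, motive (algebraMap k _ c)) (ha : ∀ x y, motive x → motive y → motive (x + y))
    (hm : ∀ x y, motive x → motive y → motive (x * y)) (w : WeylA k) : motive w := by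
  obtain ⟨w, hw⟩ := w
  have hw' := hw
  unfold WeylA at hw'
  induction hw' using Algebra.adjoin_induction with
  | mem x hx =>
    rcases hx with rfl | hx
    · exact hp
    · obtain rfl := hx
      exact hq
  | algebraMap r => exact hc r
  | add x y hx hy h1 h2 => exact ha ⟨x, hx⟩ ⟨y, hy⟩ (h1 hx) (h2 hy)
  | mul x y hx hy h1 h2 => exact hm ⟨x, hx⟩ ⟨y, hy⟩ (h1 hx) (h2 hy)

theorem Phi_surj (w : WeylA k) : ∃ F : k[X][X], Phi (pW k) (qW k) F = w := by
  suffices H : ∀ w : WeylA k, ∀ G : k[X][X], ∃ F : k[X][X], Phi (pW k) (qW k) F = w * Phi (pW k) (qW k) G by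
    obtain ⟨F, hF⟩ := H w (monomial 0 1)
    exact ⟨F, by rw [hF, Phi_mon]; simp⟩
  intro w
  induction w using W_induction with
  | hp => exact fun G => ⟨_, (Phi_X G).symm⟩
  | hq =>
    intro G
    obtain ⟨F, hF⟩ := Phi_Y (WeylA k) G
    exact ⟨F, (hF _ _ (qp_rel k)).symm⟩
  | hc c => exact fun G => ⟨_, (Phi_smul c G).symm⟩
  | ha x y hx hy =>
    intro G
    obtain ⟨A, hA⟩ := hx G
    obtain ⟨B, hB⟩ := hy G
    exact ⟨A + B, by rw [map_add, hA, hB, add_mul]⟩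
  | hm x y hx hy =>
    intro G
    obtain ⟨B, hB⟩ := hy G
    obtain ⟨A, hA⟩ := hx B
    exact ⟨A, by rw [hA, hB, mul_assoc]⟩

theorem W_hom (P Q : WeylA k) (h : Q * P = P * Q + 1) :
    ∃ f : WeylA k →ₐ[k] WeylA k, f (pW k) = P ∧ f (qW k) = Q := by
  choose G hG using Phi_surj (k := k)
  let L : WeylA k → WeylA k := fun w => Phi P Q (G w)
  have hL : ∀ F : k[X][X], L (Phi (pW k) (qW k) F) = Phi P Q F := by
    intro F
    have : G (Phi (pW k) (qW k) F) - F = 0 := by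
      apply Phi_inj
      rw [map_sub, hG]
      exact sub_self _
    change Phi P Q _ = _
    rw [sub_eq_zero.1 this]
  have hadd : ∀ x y, L (x + y) = L x + L y := by
    intro x y
    rw [← hG x, ← hG y, ← map_add, hL, hL, hL, map_add]
  have h1 : L 1 = 1 := by
    have := hL (monomial 0 1)
    simpa only [Phi_mon, map_one, pow_zero, mul_one] using this
  have hp : ∀ x, L (pW k * x) = P * L x := by
    intro x
    rw [← hG x, Phi_X, hL, hL, Phi_X]
  have hq : ∀ x, L (qW k * x) = Q * L x := by
    intro x
    obtain ⟨F, hF⟩ := Phi_Y (WeylA k) (G x)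
    rw [← hG x, hF _ _ (qp_rel k), hL, hL, hF _ _ h]
  have hc : ∀ c x, L (algebraMap k _ c * x) = algebraMap k _ c * L x := by
    intro c x
    have e1 : algebraMap k (WeylA k) c * Phi (pW k) (qW k) (G x) =
      Phi (pW k) (qW k) (C (C c) * G x) := Phi_smul (A := WeylA k) c (G x)
    have e2 : algebraMap k (WeylA k) c * Phi P Q (G x) = Phi P Q (C (C c) * G x) := Phi_smul (A := WeylA k) c (G x)
    rw [← hG x, e1, hL, hL, e2]
  have hLp : L (pW k) = P := by simpa [h1] using hp 1
  have hLq : L (qW k) = Q := by simpa [h1] using hq 1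
  have hLc : ∀ c, L (algebraMap k _ c) = algebraMap k _ c := by
    intro c; simpa [h1] using hc c 1
  have hmul : ∀ x y, L (x * y) = L x * L y := by
    intro x
    induction x using W_induction with
    | hp => intro y; rw [hp, hLp]
    | hq => intro y; rw [hq, hLq]
    | hc c => intro y; rw [hc, hLc]
    | ha x y hx hy => intro z; rw [add_mul, hadd, hadd, hx, hy, add_mul]
    | hm x y hx hy => intro z; rw [mul_assoc, hx, hy, hx, mul_assoc]
  have h0 : L 0 = 0 := by simpa using hLc 0
  exact ⟨{ toFun := L, map_one' := h1, map_mul' := hmul, map_zero' := h0, map_add' := hadd,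
           commutes' := hLc }, hLp, hLq⟩

theorem W_ext (f g : WeylA k →ₐ[k] WeylA k) (hp : f (pW k) = g (pW k)) (hq : f (qW k) = g (qW k)) :
    f = g := by
  apply AlgHom.ext
  intro w
  induction w using W_induction with
  | hp => exact hp
  | hq => exact hq
  | hc c => rw [AlgHom.commutes, AlgHom.commutes]
  | ha x y hx hy => rw [map_add, map_add, hx, hy]
  | hm x y hx hy => rw [map_mul, map_mul, hx, hy]

theorem W_aut (c : WeylA k) (h : c * pW k = pW k * c + 1) :
    ∃ f : WeylA k ≃ₐ[k] WeylA k, f (pW k) = pW k ∧ f (qW k) = c := by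
  have hq := qp_rel k
  obtain ⟨g, hg⟩ : ∃ g : k[X], c = qW k + polyP k g := by
    obtain ⟨g, hg⟩ := comm_p k (c + (-1 : k) • qW k) (by
      rw [add_mul, mul_add, smul_mul_assoc, mul_smul_comm, h, hq, smul_add]
      have : (1 : WeylA k) + (-1 : k) • 1 = 0 := by
        nth_rw 1 [← one_smul k (1 : WeylA k)]
        rw [← add_smul]; simp
      calc pW k * c + 1 + ((-1 : k) • (pW k * qW k) + (-1 : k) • (1 : WeylA k))
          = pW k * c + (-1 : k) • (pW k * qW k) + (1 + (-1 : k) • (1 : WeylA k)) := by abel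
        _ = _ := by rw [this, add_zero])
    refine ⟨g, ?_⟩
    rw [← hg, add_left_comm]
    nth_rw 1 [← one_smul k (qW k)]
    rw [← add_smul]; simp
  have hcomm : polyP k g * pW k = pW k * polyP k g := by
    have := congrArg (polyP k) (mul_comm g X)
    simpa [polyP] using this
  have hP : ∀ (f : WeylA k →ₐ[k] WeylA k) (g : k[X]), f (pW k) = pW k → f (polyP k g) = polyP k g := by
    intro f g hf
    rw [polyP, ← Polynomial.aeval_algHom_apply, hf]
  obtain ⟨f, f1, f2⟩ := W_hom (pW k) c h
  have hcomm' : polyP k (-g) * pW k = pW k * polyP k (-g) := by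
    have := congrArg (polyP k) (mul_comm (-g) X)
    rw [map_mul, map_mul] at this
    simpa only [polyP, aeval_X] using this
  obtain ⟨f', f1', f2'⟩ := W_hom (pW k) (qW k + polyP k (-g)) (by
    rw [add_mul, mul_add, hcomm', hq]; abel)
  have hz : polyP k g + polyP k (-g) = 0 := by rw [← map_add]; simp
  have hz' : polyP k (-g) + polyP k g = 0 := by rw [← map_add]; simp
  refine ⟨AlgEquiv.ofAlgHom f f' (W_ext _ _ ?_ ?_) (W_ext _ _ ?_ ?_), f1, f2⟩
  · simp [f1, f1']
  · rw [AlgHom.comp_apply, f2', map_add, f2, hP f _ f1, hg, add_assoc, hz, add_zero]; rfl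
  · simp [f1, f1']
  · rw [AlgHom.comp_apply, f2, hg, map_add, f2', hP f' _ f1', add_assoc, hz', add_zero]; rfl

theorem dW_nil (w : WeylA k) : ∃ n, (dA (pW k))^[n] w = 0 := by
  obtain ⟨F, rfl⟩ := Phi_surj w
  have : ∀ n, (dA (pW k))^[n] (Phi (pW k) (qW k) F) = Phi (pW k) (qW k) (derivative^[n] F) := by
    intro n
    induction n with
    | zero => rfl
    | succ n ih => rw [Function.iterate_succ_apply', ih, Function.iterate_succ_apply']; exact Phi_d (qp_rel k) _
  refine ⟨F.natDegree + 1, ?_⟩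
  rw [this, iterate_derivative_eq_zero (Nat.lt_succ_self _), map_zero]


end weyl

section main
variable {k}

theorem dA_apply {A : Type*} [Ring A] {N : ℕ} (p : A) (x : Matrix (Fin N) (Fin N) A) (i j) :
    dA (Matrix.diagonal fun _ => p) x i j = dA p (x i j) := by
  simp [dA, Matrix.mul_diagonal, Matrix.diagonal_mul]

theorem dA_add {A : Type*} [Ring A] (P a b : A) : dA P (a + b) = dA P a + dA P b := by
  simp only [dA, add_mul, mul_add]; abel

theorem dA_mul {A : Type*} [Ring A] (P a x b : A) (ha : dA P a = 0) (hb : dA P b = 0) :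
    dA P (a * x * b) = a * dA P x * b := by
  have ha' : P * a = a * P := (sub_eq_zero.1 ha).symm
  have hb' : b * P = P * b := sub_eq_zero.1 hb
  simp only [dA, sub_mul, mul_sub, mul_assoc, hb']
  simp only [← mul_assoc, ha']

theorem dA_mul' {A : Type*} [Ring A] (P a x : A) (ha : dA P a = 0) :
    dA P (a * x) = a * dA P x := by
  have := dA_mul P a x 1 ha (by simp [dA])
  simpa using this

theorem dA_pow {A : Type*} [Ring A] (P : A) (n : ℕ) : dA P (P ^ n) = 0 := by
  rw [dA, ← pow_succ, ← pow_succ', sub_self]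

theorem dA_sum {A : Type*} [Ring A] (P : A) (m : ℕ) (s : ℕ → A) :
    dA P (∑ i ∈ Finset.range m, P ^ i * s i) = ∑ i ∈ Finset.range m, P ^ i * dA P (s i) := by
  induction m with
  | zero => simp [dA]
  | succ m ih => rw [Finset.sum_range_succ, Finset.sum_range_succ, dA_add, ih, dA_mul' _ _ _ (dA_pow P m)]

theorem step0 {A : Type*} [Ring A] [Algebra k A] (P : A) (S : NonUnitalSubalgebra k A)
    (hex : ∀ x : A, ∃ (m : ℕ) (s : ℕ → A), (∀ i, s i ∈ S) ∧
      x = ∑ i ∈ Finset.range (m + 1), P ^ i * s i)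
    (huniq : ∀ (m : ℕ) (s : ℕ → A), (∀ i, s i ∈ S) →
      ∑ i ∈ Finset.range (m + 1), P ^ i * s i = 0 → ∀ i ∈ Finset.range (m + 1), s i = 0)
    (s t : A) (hs : s ∈ S) (h : s = P * t) : s = 0 := by
  obtain ⟨m, σ, hσ, rfl⟩ := hex t
  let τ : ℕ → A := fun i => Nat.casesOn i (-s) σ
  have h1 := huniq (m + 1) τ (by
    intro i
    cases i with
    | zero => exact neg_mem hs
    | succ i => exact hσ i) (by
    rw [Finset.sum_range_succ']
    change ∑ i ∈ Finset.range (m+1), P ^ (i+1) * σ i + P ^ 0 * (-s) = 0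
    rw [pow_zero, one_mul, h, Finset.mul_sum, add_neg_eq_zero]
    exact Finset.sum_congr rfl fun i _ => by rw [pow_succ', mul_assoc]) 0 (by simp)
  exact neg_eq_zero.1 h1

theorem step1 {A : Type*} [Ring A] [Algebra k A] (P : A) (S : NonUnitalSubalgebra k A)
    (hd : ∀ a ∈ S, dA P a ∈ S)
    (hex : ∀ x : A, ∃ (m : ℕ) (s : ℕ → A), (∀ i, s i ∈ S) ∧
      x = ∑ i ∈ Finset.range (m + 1), P ^ i * s i)
    (huniq : ∀ (m : ℕ) (s : ℕ → A), (∀ i, s i ∈ S) →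
      ∑ i ∈ Finset.range (m + 1), P ^ i * s i = 0 → ∀ i ∈ Finset.range (m + 1), s i = 0)
    (x : A) (hx : dA P x ∈ S) : ∃ s ∈ S, dA P s = dA P x ∧ ∃ t, s = x + P * t := by
  obtain ⟨m, σ, hσ, hsum⟩ := hex x
  refine ⟨σ 0, hσ 0, ?_, -∑ i ∈ Finset.range m, P ^ i * σ (i + 1), ?_⟩
  · let τ : ℕ → A := fun i => Nat.casesOn i (dA P (σ 0) - dA P x) (fun i => dA P (σ (i + 1)))
    have h1 := huniq m τ (by
      intro i
      cases i with
      | zero => exact sub_mem (hd _ (hσ 0)) hx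
      | succ i => exact hd _ (hσ (i+1))) (by
      rw [Finset.sum_range_succ']
      change ∑ i ∈ Finset.range m, P ^ (i+1) * dA P (σ (i+1)) + P ^ 0 * (dA P (σ 0) - dA P x) = 0
      have h2 := dA_sum P (m+1) σ
      rw [← hsum, Finset.sum_range_succ'] at h2
      rw [pow_zero, one_mul] at h2 ⊢
      rw [← add_sub_assoc, ← h2, sub_self]) 0 (by simp)
    exact sub_eq_zero.1 h1
  · rw [Finset.sum_range_succ', pow_zero, one_mul] at hsum
    rw [hsum, mul_neg, Finset.mul_sum]
    have : ∑ i ∈ Finset.range m, P * (P ^ i * σ (i+1)) = ∑ i ∈ Finset.range m, P ^ (i+1) * σ (i+1) :=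
      Finset.sum_congr rfl fun i _ => by rw [pow_succ', mul_assoc]
    rw [this]
    abel

theorem main_abs {A : Type*} [Ring A] [Algebra k A] (p q : A)
    (hqp : q * p = p * q + 1)
    (hinj : Function.Injective (aeval p : k[X] →ₐ[k] A))
    (hcomm : ∀ w : A, w * p = p * w → ∃ f : k[X], w = aeval p f)
    (hone : ∀ w : A, 1 = p * w → False)
    (hnil : ∀ w : A, ∃ n, (dA p)^[n] w = 0)
    (haut : ∀ c : A, c * p = p * c + 1 → ∃ f : A ≃ₐ[k] A, f p = p ∧ f q = c)
    (N : ℕ) (hN : 0 < N) (P : Matrix (Fin N) (Fin N) A) (hPdef : P = Matrix.diagonal fun _ => p)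
    (S : NonUnitalSubalgebra k (Matrix (Fin N) (Fin N) A))
    (hd : ∀ a ∈ S, dA P a ∈ S)
    (hex : ∀ x : Matrix (Fin N) (Fin N) A, ∃ (m : ℕ) (s : ℕ → Matrix (Fin N) (Fin N) A),
      (∀ i, s i ∈ S) ∧ x = ∑ i ∈ Finset.range (m + 1), P ^ i * s i)
    (huniq : ∀ (m : ℕ) (s : ℕ → Matrix (Fin N) (Fin N) A), (∀ i, s i ∈ S) →
      ∑ i ∈ Finset.range (m + 1), P ^ i * s i = 0 → ∀ i ∈ Finset.range (m + 1), s i = 0) :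
    ∃ θ : Matrix (Fin N) (Fin N) A ≃ₐ[k] Matrix (Fin N) (Fin N) A,
      (∀ a, θ (dA P a) = dA P (θ a)) ∧ θ P = P ∧
      θ '' (S : Set (Matrix (Fin N) (Fin N) A)) =
        {x | ∃ B : Matrix (Fin N) (Fin N) k[X], x = B.map (aeval q : k[X] →ₐ[k] A)} := by
  let o : Fin N := ⟨0, hN⟩
  have hS0 := step0 P S hex huniq
  have hS1 := step1 P S hd hex huniq
  let ι : Matrix (Fin N) (Fin N) k →ₐ[k] Matrix (Fin N) (Fin N) A := (Algebra.ofId k A).mapMatrix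
  let PP : Matrix (Fin N) (Fin N) k[X] →ₐ[k] Matrix (Fin N) (Fin N) A :=
    (aeval p : k[X] →ₐ[k] A).mapMatrix
  have hι : ∀ B i j, ι B i j = algebraMap k A (B i j) := fun B i j => rfl
  have hPPe : ∀ B i j, PP B i j = aeval p (B i j) := fun B i j => rfl
  have hdP : ∀ x i j, dA P x i j = dA p (x i j) := by
    intro x i j; rw [hPdef, dA_apply]
  have hιd : ∀ B, dA P (ι B) = 0 := by
    intro B; ext i j
    rw [hdP, hι, dA, Algebra.commutes, sub_self]; rfl
  have hPPd : ∀ B, dA P (PP B) = 0 := by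
    intro B; ext i j
    rw [hdP, hPPe, dA]
    have : (aeval p (B i j * X) : A) = aeval p (X * B i j) := by rw [mul_comm]
    rw [map_mul, map_mul, aeval_X] at this
    rw [this, sub_self]; rfl
  have hker : ∀ x, dA P x = 0 → ∃ F, x = PP F := by
    intro x hx
    have : ∀ i j, ∃ f : k[X], x i j = aeval p f := by
      intro i j
      apply hcomm
      have h1 := hdP x i j
      rw [hx] at h1
      exact sub_eq_zero.1 h1.symm
    choose F hF using this
    exact ⟨Matrix.of F, by ext i j; rw [hPPe]; exact hF i j⟩
  have hρ : ∀ B, ∃ s ∈ S, dA P s = 0 ∧ ∃ t, s = ι B + P * t := by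
    intro B
    obtain ⟨s, h1, h2, h3⟩ := hS1 (ι B) (by rw [hιd]; exact zero_mem S)
    exact ⟨s, h1, by rw [h2, hιd], h3⟩
  choose ρ hρS hρd t hρt using hρ
  have hagree : ∀ s ∈ S, ∀ B u, s = ι B + P * u → s = ρ B := by
    intro s hs B u h
    apply sub_eq_zero.1
    apply hS0 _ (u - t B) (sub_mem hs (hρS B))
    rw [h, hρt B, mul_sub]; abel
  have hρmul : ∀ B B', ρ B * ρ B' = ρ (B * B') := by
    intro B B'
    apply hagree _ (mul_mem (hρS B) (hρS B')) _ (ι B * t B' + t B * ρ B')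
    conv_lhs => rw [hρt B, add_mul]
    conv_lhs => enter [1]; rw [hρt B', mul_add, ← mul_assoc, sub_eq_zero.1 (hιd B)]
    rw [map_mul, mul_add]
    simp only [mul_assoc, add_assoc]
  let ρL : Matrix (Fin N) (Fin N) k →ₗ[k] Matrix (Fin N) (Fin N) A :=
    { toFun := ρ
      map_add' := by
        intro B B'
        symm
        apply hagree _ (add_mem (hρS B) (hρS B')) _ (t B + t B')
        rw [hρt B, hρt B', map_add, mul_add]; abel
      map_smul' := by
        intro c B
        symm
        apply hagree _ (SMulMemClass.smul_mem _ (hρS B)) _ (c • t B)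
        simp only [RingHom.id_apply]
        rw [hρt B, map_smul, mul_smul_comm, smul_add] }
  have hρk : ∀ s ∈ S, dA P s = 0 → ∃ B, s = ρ B := by
    intro s hs hs0
    obtain ⟨F, rfl⟩ := hker s hs0
    refine ⟨F.map (fun f => f.coeff 0), hagree _ hs _ (PP (F.map divX)) ?_⟩
    ext i j
    rw [Matrix.add_apply, hPdef, Matrix.diagonal_mul, hι, hPPe, hPPe, Matrix.map_apply, Matrix.map_apply]
    conv_lhs => rw [← divX_mul_X_add (F i j), mul_comm]
    rw [map_add, map_mul, aeval_X, aeval_C, add_comm]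
  have hPPinj : Function.Injective PP := by
    intro B B' h
    ext1 i j
    exact hinj (congrFun (congrFun h i) j)
  have hε : ∀ i j : Fin N, ∃ F, ρ (Matrix.single i j 1) = PP F := fun i j => hker _ (hρd _)
  choose ε hε using hε
  have hρ0 : ρ 0 = 0 := map_zero ρL
  obtain ⟨h, h', hh1, hh2, hh3⟩ := pid_units ε (by
    intro i j l m
    apply hPPinj
    rw [map_mul, ← hε, ← hε, hρmul]
    by_cases hjl : j = l
    · subst hjl
      rw [if_pos rfl, ← hε, Matrix.single_mul_single_same, mul_one]
    · rw [if_neg hjl, map_zero, Matrix.single_mul_single_of_ne _ _ _ _ hjl, hρ0]) o (by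
    intro h0
    have h1 := hρt (Matrix.single o o 1)
    rw [hε, h0, map_zero] at h1
    have h2 := congrFun (congrFun h1 o) o
    rw [Matrix.add_apply, hPdef, Matrix.diagonal_mul, hι, Matrix.single_apply_same, map_one] at h2
    apply hone (- t (Matrix.single o o 1) o o)
    rw [mul_neg]
    exact eq_neg_of_add_eq_zero_left h2.symm)
  obtain ⟨H, hH⟩ : ∃ H, H = PP h := ⟨_, rfl⟩
  obtain ⟨H', hH'⟩ : ∃ H', H' = PP h' := ⟨_, rfl⟩
  have hHH : H * H' = 1 := by rw [hH, hH', ← map_mul, hh2, map_one]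
  have hHH' : H' * H = 1 := by rw [hH, hH', ← map_mul, hh1, map_one]
  have hHd : dA P H = 0 := by rw [hH, hPPd]
  have hHd' : dA P H' = 0 := by rw [hH', hPPd]
  have hconj : ∀ B, H' * ρ B * H = ι B := by
    intro B
    have h1 : ∀ i j : Fin N, H' * ρ (Matrix.single i j 1) * H = ι (Matrix.single i j 1) := by
      intro i j
      rw [hε, hH, hH', ← map_mul, ← map_mul, hh3]
      ext a b
      rw [hPPe, hι, Matrix.single_apply, Matrix.single_apply]
      split_ifs <;> simp
    have h2 : ∀ i j : Fin N, ∀ c : k, H' * ρL (Matrix.single i j c) * H = ι (Matrix.single i j c) := by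
      intro i j c
      have : Matrix.single i j c = c • Matrix.single i j (1 : k) := by
        rw [Matrix.smul_single, smul_eq_mul, mul_one]
      rw [this, map_smul, map_smul, ← h1, mul_smul_comm, smul_mul_assoc]
      rfl
    change H' * ρL B * H = ι B
    rw [Matrix.matrix_eq_sum_single B]
    simp only [map_sum, Finset.mul_sum, Finset.sum_mul, h2]
  have hcan : ∀ x, H' * (H * x * H') * H = x := by
    intro x
    calc H' * (H * x * H') * H = (H' * H) * x * (H' * H) := by simp only [mul_assoc]
      _ = x := by rw [hHH', one_mul, mul_one]
  have hcan' : ∀ x, H * (H' * x * H) * H' = x := by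
    intro x
    calc H * (H' * x * H) * H' = (H * H') * x * (H * H') := by simp only [mul_assoc]
      _ = x := by rw [hHH, one_mul, mul_one]
  let γ : Matrix (Fin N) (Fin N) A ≃ₐ[k] Matrix (Fin N) (Fin N) A :=
    { toFun := fun x => H * x * H'
      invFun := fun x => H' * x * H
      left_inv := hcan
      right_inv := hcan'
      map_mul' := by
        intro x y
        calc H * (x * y) * H' = H * x * 1 * y * H' := by simp only [mul_assoc, one_mul]
          _ = _ := by rw [← hHH']; simp only [mul_assoc]
      map_add' := by intro x y; rw [mul_add, add_mul]
      commutes' := by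
        intro r
        change H * algebraMap k _ r * H' = _
        rw [← Algebra.commutes, mul_assoc, hHH, mul_one] }
  have hγ : ∀ x, γ x = H * x * H' := fun _ => rfl
  have hγs : ∀ x, γ.symm x = H' * x * H := fun _ => rfl
  let T : NonUnitalSubalgebra k (Matrix (Fin N) (Fin N) A) := NonUnitalSubalgebra.comap γ S
  have hT : ∀ x, x ∈ T ↔ H * x * H' ∈ S := fun _ => Iff.rfl
  have hTι : ∀ B, ι B ∈ T := by
    intro B
    rw [hT, ← hconj, hcan']
    exact hρS B
  have hTd : ∀ x ∈ T, dA P x ∈ T := by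
    intro x hx
    rw [hT] at hx ⊢
    rw [← dA_mul P H x H' hHd hHd']
    exact hd _ hx
  have hTk : ∀ x ∈ T, dA P x = 0 → ∃ B, x = ι B := by
    intro x hx hx0
    obtain ⟨B, hB⟩ := hρk _ ((hT x).1 hx) (by rw [dA_mul P H x H' hHd hHd', hx0, mul_zero, zero_mul])
    exact ⟨B, by rw [← hconj, ← hB, hcan]⟩
  have hιs : ∀ i j : Fin N, ι (Matrix.single i j 1) = Matrix.single i j 1 := by
    intro i j
    ext a b
    rw [hι, Matrix.single_apply, Matrix.single_apply]
    split_ifs <;> simp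
  have hentry : ∀ x ∈ T, ∀ i j, (Matrix.diagonal fun _ => x i j) ∈ T := by
    intro x hx i j
    have : (Matrix.diagonal fun _ => x i j) =
        ∑ l : Fin N, ι (Matrix.single l i 1) * x * ι (Matrix.single j l 1) := by
      simp only [hιs, Matrix.single_mul_mul_single, one_mul, mul_one]
      ext a b
      rw [Matrix.sum_apply, Matrix.diagonal_apply]
      simp only [Matrix.single_apply]
      by_cases hab : a = b
      · subst hab; simp
      · rw [if_neg hab]
        symm
        apply Finset.sum_eq_zero
        intro l _
        rw [if_neg]
        rintro ⟨rfl, rfl⟩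
        exact hab rfl
    rw [this]
    exact sum_mem fun l _ => mul_mem (mul_mem (hTι _) hx) (hTι _)
  have h1S : (1 : Matrix (Fin N) (Fin N) A) ∈ S := by
    have := hTι 1
    rw [hT, map_one, mul_one, hHH] at this
    exact this
  have hdq1 : dA P (Matrix.diagonal fun _ => q) = 1 := by
    rw [hPdef, dA, Matrix.diagonal_mul_diagonal, Matrix.diagonal_mul_diagonal, ← Matrix.diagonal_one]
    simp only [hqp]
    rw [Matrix.diagonal_sub]
    simp
  obtain ⟨s0, hs0, hs1, -⟩ := hS1 (Matrix.diagonal fun _ => q) (by rw [hdq1]; exact h1S)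
  rw [hdq1] at hs1
  obtain ⟨c, hcT, hc⟩ : ∃ c : A, (Matrix.diagonal fun _ => c) ∈ T ∧ c * p = p * c + 1 := by
    refine ⟨(H' * s0 * H) o o, hentry _ (by rw [hT, hcan']; exact hs0) o o, ?_⟩
    have h1 : dA P (H' * s0 * H) = 1 := by
      rw [dA_mul P H' s0 H hHd' hHd, hs1, mul_one, hHH']
    have h2 := hdP (H' * s0 * H) o o
    rw [h1, Matrix.one_apply_eq, dA] at h2
    rw [h2]; abel
  have hTc : ∀ b : k[X], (Matrix.diagonal fun _ => aeval c b) ∈ T := by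
    intro b
    induction b using Polynomial.induction_on with
    | C a =>
      convert hTι (Matrix.diagonal fun _ => a) using 1
      ext i j
      rw [hι, Matrix.diagonal_apply, Matrix.diagonal_apply, aeval_C]
      split_ifs <;> simp
    | add x y hx hy =>
      have := add_mem hx hy
      rw [Matrix.diagonal_add] at this
      simpa only [map_add] using this
    | monomial n a ih =>
      have := mul_mem ih hcT
      rw [Matrix.diagonal_mul_diagonal] at this
      rw [pow_succ, ← mul_assoc, map_mul, aeval_X]
      exact this
  have hCgen := gen_c (k := k) hc hnil {w | (Matrix.diagonal fun _ => w) ∈ T} (by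
    intro w hw
    have := hentry _ (hTd _ hw) o o
    simp only [hdP, Matrix.diagonal_apply_eq] at this
    exact this) (by
    intro w hw b
    have := sub_mem hw (hTc b)
    rw [Matrix.diagonal_sub] at this
    exact this) (by
    intro w hw hw0
    obtain ⟨B, hB⟩ := hTk _ hw (by
      ext i j
      rw [hdP, Matrix.diagonal_apply]
      split_ifs
      · exact hw0
      · simp [dA])
    have := congrFun (congrFun hB o) o
    rw [Matrix.diagonal_apply_eq, hι] at this
    exact ⟨_, this⟩)
  obtain ⟨f, hfp, hfq⟩ := haut c hc
  have hfb : ∀ b : k[X], f (aeval q b) = aeval c b := by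
    intro b
    have := Polynomial.aeval_algHom_apply f.toAlgHom q b
    rw [← hfq]
    exact this.symm
  have hfb' : ∀ b : k[X], f.symm (aeval c b) = aeval q b := by
    intro b
    rw [← hfb, AlgEquiv.symm_apply_apply]
  let θ : Matrix (Fin N) (Fin N) A ≃ₐ[k] Matrix (Fin N) (Fin N) A := γ.symm.trans f.symm.mapMatrix
  have hθ : ∀ x, θ x = (H' * x * H).map f.symm := fun _ => rfl
  have hθP : θ P = P := by
    rw [hθ, sub_eq_zero.1 hHd', mul_assoc, hHH', mul_one, hPdef, Matrix.diagonal_map (map_zero _)]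
    congr 1
    ext i
    change f.symm p = p
    rw [← hfp, AlgEquiv.symm_apply_apply, hfp]
  refine ⟨θ, ?_, hθP, ?_⟩
  · intro a
    rw [dA, map_sub, map_mul, map_mul, hθP]; rfl
  · ext x
    constructor
    · rintro ⟨s, hs, rfl⟩
      have hyT : H' * s * H ∈ T := by rw [hT, hcan']; exact hs
      have : ∀ i j, ∃ b : k[X], (H' * s * H) i j = aeval c b := fun i j =>
        hCgen _ (hentry _ hyT i j)
      choose B hB using this
      refine ⟨Matrix.of B, ?_⟩
      ext i j
      rw [hθ, Matrix.map_apply, hB, hfb', Matrix.map_apply]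
      rfl
    · rintro ⟨B, rfl⟩
      refine ⟨H * (B.map (aeval c : k[X] →ₐ[k] A)) * H', ?_, ?_⟩
      · change _ ∈ T
        rw [Matrix.matrix_eq_sum_single (B.map _)]
        refine sum_mem fun i _ => sum_mem fun j _ => ?_
        have : Matrix.single i j (B.map (aeval c : k[X] →ₐ[k] A) i j) =
            ι (Matrix.single i j 1) * Matrix.diagonal fun _ => aeval c (B i j) := by
          rw [hιs]
          ext a b
          rw [Matrix.mul_diagonal, Matrix.single_apply, Matrix.single_apply]
          split_ifs <;> simp
        rw [this]
        exact mul_mem (hTι _) (hTc _)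
      · rw [hθ, hcan]
        ext i j
        rw [Matrix.map_apply, Matrix.map_apply, hfb', Matrix.map_apply]

end main

/-- Proposition 4.2.4: if `S ⊆ M_N(W)` is a `∂_q`-invariant subalgebra with
`M_N(W) = ⊕_{n≥0} p^n·S`, then some `∂_q`-invariant automorphism `θ` of
`M_N(W)` fixes `p` and carries `S` onto `M_N(k[q])`. -/
theorem direct_sum_decomposition_conjugate_to_current [IsAlgClosed k] (N : ℕ) (hN : 0 < N)
    (S : NonUnitalSubalgebra k (MW k N))
    (hdq : ∀ a ∈ S, dq k N a ∈ S)
    (hex : ∀ x : MW k N, ∃ (m : ℕ) (s : ℕ → MW k N), (∀ i, s i ∈ S) ∧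
      x = ∑ i ∈ Finset.range (m + 1), pM k N ^ i * s i)
    (huniq : ∀ (m : ℕ) (s : ℕ → MW k N), (∀ i, s i ∈ S) →
      ∑ i ∈ Finset.range (m + 1), pM k N ^ i * s i = 0 →
      ∀ i ∈ Finset.range (m + 1), s i = 0) :
    ∃ θ : MW k N ≃ₐ[k] MW k N,
      (∀ a : MW k N, θ (dq k N a) = dq k N (θ a)) ∧
      θ (pM k N) = pM k N ∧
      θ '' (S : Set (MW k N)) =
        {x : MW k N | ∃ B : Matrix (Fin N) (Fin N) (Polynomial k), x = B.map (polyQ k)} := by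
  obtain ⟨θ, h1, h2, h3⟩ := @main_abs k _ _ (WeylA k) (Subalgebra.toRing _) (Subalgebra.algebra _)
    (pW k) (qW k) (qp_rel k) (by intro a b e; exact polyP_inj k e) (comm_p k) (one_ne_p_mul k)
    dW_nil W_aut N hN (pM k N) rfl S hdq hex huniq
  exact ⟨θ, h1, h2, h3⟩

end
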